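/- For every integer n ≥ 1 the dual canonical basis elements satisfy B[n,0,0,n]·B[1,0,0,1] = q^{−4n} B[n+1,0,0,n+1] + q^{−4n} B[n,1,1,n] and B[1,0,0,1]·B[n,0,0,n] = q^{−4n} B[n+1,0,0,n+1] + q^{−4n} B[n,1,1,n]; in particular B[1,0,0,1] commutes with B[n,0,0,n], yet their product is a linear combination of two dual canonical basis elements. -/

import Mathlib

noncomputable section

abbrev F : Type := RatFunc ℚ

/-- The deformation parameter `q`. -/
def qq : F := RatFunc.X

/-- The quantum integer `[3] = q² + 1 + q⁻²`. -/
def box3 : F := qq ^ 2 + 1 + (qq⁻¹) ^ 2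

/-- The generators `E₁, E₂` of the free algebra. -/
def gen (i : Fin 2) : FreeAlgebra F (Fin 2) := FreeAlgebra.ι F i

/-- The quantized Serre relations. -/
inductive SerreRel : FreeAlgebra F (Fin 2) → FreeAlgebra F (Fin 2) → Prop
  | rel1 : SerreRel
      (gen 0 ^ 3 * gen 1 - box3 • (gen 0 ^ 2 * gen 1 * gen 0)
        + box3 • (gen 0 * gen 1 * gen 0 ^ 2) - gen 1 * gen 0 ^ 3) 0
  | rel2 : SerreRel
      (gen 1 ^ 3 * gen 0 - box3 • (gen 1 ^ 2 * gen 0 * gen 1)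
        + box3 • (gen 1 * gen 0 * gen 1 ^ 2) - gen 0 * gen 1 ^ 3) 0

/-- `U = U_q(𝔫)`, the free algebra on `E₁, E₂` modulo the quantized Serre relations. -/
abbrev U : Type := RingQuot SerreRel

def E1 : U := RingQuot.mkAlgHom F SerreRel (gen 0)
def E2 : U := RingQuot.mkAlgHom F SerreRel (gen 1)

/-- `A = (1/(q+q⁻¹))(E₂E₁ − q⁻²E₁E₂)`. -/
def Aelt : U := (qq + qq⁻¹)⁻¹ • (E2 * E1 - (qq⁻¹) ^ 2 • (E1 * E2))

def v0 : U := E1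
def v1 : U := Aelt * v0 - v0 * Aelt
def v2 : U := Aelt * v1 - v1 * Aelt
def v3 : U := Aelt * v2 - v2 * Aelt

/-- `uᵢ = (1 − q⁻²)⁻²ⁱ vᵢ`. -/
def u0 : U := v0
def u1 : U := ((1 - (qq⁻¹) ^ 2)⁻¹) ^ 2 • v1
def u2 : U := ((1 - (qq⁻¹) ^ 2)⁻¹) ^ 4 • v2
def u3 : U := ((1 - (qq⁻¹) ^ 2)⁻¹) ^ 6 • v3

/-- `p₁ = u₃u₁ − q²u₂²`. -/
def p1 : U := u3 * u1 - qq ^ 2 • u2 ^ 2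
/-- `p₀ = u₂u₀ − q²u₁²`. -/
def p0 : U := u2 * u0 - qq ^ 2 • u1 ^ 2

/-- `S`, the subalgebra of `U` generated by `u₀, u₁, u₂, u₃`. -/
abbrev Sgen : Subalgebra F U := Algebra.adjoin F ({u0, u1, u2, u3} : Set U)

def us0 : Sgen := ⟨u0, Algebra.subset_adjoin (by simp)⟩
def us1 : Sgen := ⟨u1, Algebra.subset_adjoin (by simp)⟩
def us2 : Sgen := ⟨u2, Algebra.subset_adjoin (by simp)⟩
def us3 : Sgen := ⟨u3, Algebra.subset_adjoin (by simp)⟩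

/-- `p₁ = u₃u₁ − q²u₂²` as an element of `S`. -/
def ps1 : Sgen := us3 * us1 - qq ^ 2 • us2 ^ 2
/-- `p₀ = u₂u₀ − q²u₁²` as an element of `S`. -/
def ps0 : Sgen := us2 * us0 - qq ^ 2 • us1 ^ 2

/-- Index quadruples `a = (a₃, a₂, a₁, a₀)`. -/
abbrev Idx : Type := ℕ × ℕ × ℕ × ℕ

/-- The PBW monomial `u₃^{a₃}u₂^{a₂}u₁^{a₁}u₀^{a₀}`. -/
def mon (a : Idx) : Sgen := us3 ^ a.1 * us2 ^ a.2.1 * us1 ^ a.2.2.1 * us0 ^ a.2.2.2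

/-- `b(a) = C(a₃,2)+C(a₂,2)+C(a₁,2)+C(a₀,2)`. -/
def bexp (a : Idx) : ℕ :=
  Nat.choose a.1 2 + Nat.choose a.2.1 2 + Nat.choose a.2.2.1 2 + Nat.choose a.2.2.2 2

/-- The dual PBW basis element `E[a] = q^{b(a)} u₃^{a₃}u₂^{a₂}u₁^{a₁}u₀^{a₀}`. -/
def Ee (a : Idx) : Sgen := qq ^ bexp a • mon a

/-- `N(a) = (a₃+a₂+a₁+a₀)² − 7a₃ − 5a₂ − 3a₁ − a₀`. -/
def Nnum (a : Idx) : ℤ :=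
  ((a.1 : ℤ) + a.2.1 + a.2.2.1 + a.2.2.2) ^ 2
    - 7 * a.1 - 5 * a.2.1 - 3 * a.2.2.1 - a.2.2.2

/-- `a ⊴ b` iff `b − a ∈ ℕ·(−1,2,−1,0) + ℕ·(0,−1,2,−1)`. -/
def tri (a b : Idx) : Prop :=
  ∃ s r : ℕ,
    (b.1 : ℤ) = a.1 - s ∧
    (b.2.1 : ℤ) = a.2.1 + 2 * s - r ∧
    (b.2.2.1 : ℤ) = a.2.2.1 - s + 2 * r ∧
    (b.2.2.2 : ℤ) = a.2.2.2 - r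

/-- `S(a) = {b ∈ ℕ⁴ : a ⊴ b and a ≠ b}`. -/
def Sset (a : Idx) : Set Idx := {b | tri a b ∧ a ≠ b}

/-- Condition (i): `B[a] − E[a] ∈ Σ_{b ∈ S(a)} qℤ[q]·E[b]`. -/
def cond1 (B : Idx → Sgen) (a : Idx) : Prop :=
  ∃ φ : Idx →₀ Polynomial ℤ,
    (↑φ.support : Set Idx) ⊆ Sset a ∧
    B a - Ee a =
      φ.sum fun b p => (qq * Polynomial.eval₂ (Int.castRingHom F) qq p) • Ee b

/-- Hypotheses on the bar involution of coefficients `bar : q ↦ q⁻¹` and on the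
anti-automorphism `σ` of `S`: `σ` is an additive, anti-multiplicative bijection with
`σ(c(q)·x) = c(q⁻¹)·σ(x)` and `σ(uᵢ) = q^{2i}uᵢ`. -/
def SigmaHyp (bar : F →+* F) (σ : Sgen → Sgen) : Prop :=
  bar qq = qq⁻¹ ∧
  Function.Bijective σ ∧
  (∀ x y : Sgen, σ (x + y) = σ x + σ y) ∧
  (∀ x y : Sgen, σ (x * y) = σ y * σ x) ∧
  (∀ (c : F) (x : Sgen), σ (c • x) = bar c • σ x) ∧
  σ us0 = us0 ∧ σ us1 = qq ^ 2 • us1 ∧ σ us2 = qq ^ 4 • us2 ∧ σ us3 = qq ^ 6 • us3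

/-- The defining properties of the dual canonical basis `B`: for every `a ∈ ℕ⁴`,
`B[a] − E[a] ∈ Σ_{b ∈ S(a)} qℤ[q]·E[b]` and `σ(B[a]) = q^{−N(a)}B[a]`. -/
def DCB (bar : F →+* F) (σ : Sgen → Sgen) (B : Idx → Sgen) : Prop :=
  ∀ a : Idx, cond1 B a ∧ σ (B a) = qq ^ (-Nnum a) • B a

/-- Extension of `B` to integer quadruples by the convention that `B[a] = 0` whenever
some coordinate of `a` is negative. -/
def Bz (B : Idx → Sgen) (a : ℤ × ℤ × ℤ × ℤ) : Sgen :=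
  if 0 ≤ a.1 ∧ 0 ≤ a.2.1 ∧ 0 ≤ a.2.2.1 ∧ 0 ≤ a.2.2.2 then
    B (a.1.toNat, a.2.1.toNat, a.2.2.1.toNat, a.2.2.2.toNat)
  else 0

/-!
The elements `z = u₃u₀ − q²u₂u₁` and `f = q⁻²p₁p₀` commute, so the Chebyshev-type elements
`S₀ = 0`, `S₁ = 1`, `Sₙ₊₂ = Sₙ₊₁z − Sₙf` lie in a commutative algebra. Two families `yₙ`, `wₙ` with
`Sₙ₊₂ = q⁻²ⁿyₙu₀ − q⁴wₙu₁` show by induction that suitable `q`-powers times `Sₙ₊₁` and `Sₙ₊₁f` are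
congruent to `E[n,0,0,n]` and `E[n+1,1,1,n+1]` modulo `qℤ[q]`-combinations of PBW monomials. They
are also eigenvectors of `σ` with the eigenvalues prescribed for `B[n,0,0,n]` and `B[n+1,1,1,n+1]`,
and Lusztig's argument makes an element with these two properties unique. Hence the Chebyshev
recursion is the asserted multiplication formula.
-/

section QCommute

variable {K A : Type*} [Field K] [Ring A] [Algebra K A] {q : K} {k l : ℤ} {x x' y y' : A}

/-- `x` and `y` commute up to the power `q ^ k`. -/
def QCommute (q : K) (k : ℤ) (x y : A) : Prop := x * y = q ^ k • (y * x)

namespace QCommute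

theorem eq (h : QCommute q k x y) : x * y = q ^ k • (y * x) := h

theorem refl (q : K) (x : A) : QCommute q 0 x x := by simp [QCommute]

theorem symm (hq : q ≠ 0) (h : QCommute q k x y) : QCommute q (-k) y x := by
  rw [QCommute, h.eq, smul_smul, ← zpow_add₀ hq, neg_add_cancel, zpow_zero, one_smul]

theorem of_commute (h : Commute x y) : QCommute q 0 x y := by
  rw [QCommute, zpow_zero, one_smul, h.eq]

theorem commute (h : QCommute q 0 x y) : Commute x y := by
  rw [commute_iff_eq, h.eq, zpow_zero, one_smul]

theorem mul_left (hq : q ≠ 0) (h : QCommute q k x y) (h' : QCommute q l x' y) :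
    QCommute q (k + l) (x * x') y := by
  rw [QCommute, mul_assoc, h'.eq, mul_smul_comm, ← mul_assoc, h.eq, smul_mul_assoc, smul_smul,
    mul_assoc, zpow_add₀ hq, mul_comm]

theorem mul_right (hq : q ≠ 0) (h : QCommute q k x y) (h' : QCommute q l x y') :
    QCommute q (k + l) x (y * y') := by
  rw [QCommute, ← mul_assoc, h.eq, smul_mul_assoc, mul_assoc, h'.eq, mul_smul_comm, smul_smul,
    mul_assoc, zpow_add₀ hq]

theorem smul_left (h : QCommute q k x y) (r : K) : QCommute q k (r • x) y := by
  rw [QCommute, smul_mul_assoc, h.eq, mul_smul_comm, smul_comm]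

theorem smul_right (h : QCommute q k x y) (r : K) : QCommute q k x (r • y) := by
  rw [QCommute, smul_mul_assoc, mul_smul_comm, h.eq, smul_comm]

theorem sub_left (h : QCommute q k x y) (h' : QCommute q k x' y) : QCommute q k (x - x') y := by
  rw [QCommute, sub_mul, h.eq, h'.eq, mul_sub, smul_sub]

theorem sub_right (h : QCommute q k x y) (h' : QCommute q k x y') : QCommute q k x (y - y') := by
  rw [QCommute, mul_sub, h.eq, h'.eq, sub_mul, smul_sub]

theorem pow_right (hq : q ≠ 0) (h : QCommute q k x y) (n : ℕ) : QCommute q (k * n) x (y ^ n) := by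
  induction n with
  | zero => simp [QCommute]
  | succ n ih =>
    rw [pow_succ, Nat.cast_succ, mul_add_one]
    exact ih.mul_right hq h

theorem pow_left (hq : q ≠ 0) (h : QCommute q k x y) (n : ℕ) : QCommute q (k * n) (x ^ n) y := by
  simpa using ((h.symm hq).pow_right hq n).symm hq

end QCommute

end QCommute

section Straightening

/-- Four elements of a `K`-algebra subject to the straightening relations of the quantized
coordinate ring of the unipotent subgroup of type `A₁⁽¹⁾` attached to a reduced word of
length four. The relations rewrite every product into PBW order `u₃, u₂, u₁, u₀`. -/
structure StraighteningTuple {K : Type*} [Field K] (q : K) (A : Type*) [Ring A] [Algebra K A] where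
  (u₀ u₁ u₂ u₃ : A)
  q_ne_zero : q ≠ 0
  u₀_u₁ : QCommute q (-2) u₀ u₁
  u₁_u₂ : QCommute q (-2) u₁ u₂
  u₂_u₃ : QCommute q (-2) u₂ u₃
  u₀_mul_u₂ : u₀ * u₂ = q ^ (-2 : ℤ) • (u₂ * u₀) + (q ^ (-2 : ℤ) - 1) • (u₁ * u₁)
  u₁_mul_u₃ : u₁ * u₃ = q ^ (-2 : ℤ) • (u₃ * u₁) + (q ^ (-2 : ℤ) - 1) • (u₂ * u₂)
  u₀_mul_u₃ : u₀ * u₃ = q ^ (-2 : ℤ) • (u₃ * u₀) + (q ^ (-4 : ℤ) - 1) • (u₂ * u₁)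

theorem mul_mul_of_mul_eq {M : Type*} [Semigroup M] {x y r : M} (h : x * y = r) (t : M) :
    x * (y * t) = r * t := by
  rw [← mul_assoc, h]

theorem choose_two_succ (k : ℕ) : (k + 1).choose 2 = k.choose 2 + k := by
  rw [Nat.choose_succ_succ' k 1, Nat.choose_one_right, add_comm]

variable {K A : Type*} [Field K] [Ring A] [Algebra K A] {q : K}

namespace StraighteningTuple

open MulOpposite in
/-- The symmetry `uᵢ ↦ u₃₋ᵢ` of the relations, which reverses products. It exchanges `p₁`
and `p₀` and fixes `z`. -/
def opposite (T : StraighteningTuple q A) : StraighteningTuple q Aᵐᵒᵖ where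
  u₀ := op T.u₃
  u₁ := op T.u₂
  u₂ := op T.u₁
  u₃ := op T.u₀
  q_ne_zero := T.q_ne_zero
  u₀_u₁ := congrArg op T.u₂_u₃
  u₁_u₂ := congrArg op T.u₁_u₂
  u₂_u₃ := congrArg op T.u₀_u₁
  u₀_mul_u₂ := congrArg op T.u₁_mul_u₃
  u₁_mul_u₃ := congrArg op T.u₀_mul_u₂
  u₀_mul_u₃ := congrArg op T.u₀_mul_u₃

/-- The quantum minor `p₁ = u₃u₁ − q²u₂²`. -/
def p₁ (T : StraighteningTuple q A) : A := T.u₃ * T.u₁ - q ^ 2 • (T.u₂ * T.u₂)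

/-- The quantum minor `p₀ = u₂u₀ − q²u₁²`. -/
def p₀ (T : StraighteningTuple q A) : A := T.u₂ * T.u₀ - q ^ 2 • (T.u₁ * T.u₁)

/-- The element `z = u₃u₀ − q²u₂u₁`, which turns out to be `B[1,0,0,1]`. -/
def z (T : StraighteningTuple q A) : A := T.u₃ * T.u₀ - q ^ 2 • (T.u₂ * T.u₁)

/-- The product `f = q⁻²p₁p₀`, a power of `q` times `B[1,1,1,1]`. -/
def f (T : StraighteningTuple q A) : A := q ^ (-2 : ℤ) • (T.p₁ * T.p₀)

variable (T : StraighteningTuple q A)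

theorem u₀_p₁ : QCommute q (-4) T.u₀ T.p₁ := by
  have hq := T.q_ne_zero
  simp only [QCommute, p₁, mul_sub, sub_mul, add_mul, mul_add, mul_assoc, smul_mul_assoc,
    mul_smul_comm, T.u₀_mul_u₂, T.u₀_u₁.eq, T.u₁_u₂.eq, mul_mul_of_mul_eq T.u₀_mul_u₃,
    mul_mul_of_mul_eq T.u₀_mul_u₂, mul_mul_of_mul_eq T.u₁_u₂.eq]
  match_scalars <;> field_simp
  all_goals ring

theorem u₁_p₁ : QCommute q (-2) T.u₁ T.p₁ := by
  have hq := T.q_ne_zero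
  simp only [QCommute, p₁, mul_sub, sub_mul, add_mul, mul_assoc, smul_mul_assoc,
    mul_smul_comm, T.u₁_u₂.eq, mul_mul_of_mul_eq T.u₁_mul_u₃, mul_mul_of_mul_eq T.u₁_u₂.eq]
  match_scalars <;> field_simp
  all_goals ring

theorem u₂_p₁ : QCommute q 0 T.u₂ T.p₁ := by
  have hq := T.q_ne_zero
  have h₃₁ : QCommute q (-2 + 2) T.u₂ (T.u₃ * T.u₁) := T.u₂_u₃.mul_right hq (T.u₁_u₂.symm hq)
  have h₂₂ : QCommute q (0 + 0) T.u₂ (T.u₂ * T.u₂) :=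
    (QCommute.refl q T.u₂).mul_right hq (.refl q T.u₂)
  exact h₃₁.sub_right (h₂₂.smul_right _)

theorem u₃_p₁ : QCommute q 2 T.u₃ T.p₁ := by
  have hq := T.q_ne_zero
  simp only [QCommute, p₁, mul_sub, sub_mul, mul_add, mul_assoc, smul_mul_assoc,
    mul_smul_comm, T.u₁_mul_u₃, T.u₂_u₃.eq, mul_mul_of_mul_eq T.u₂_u₃.eq]
  match_scalars <;> field_simp
  all_goals ring

theorem p₀_u₃ : QCommute q (-4) T.p₀ T.u₃ := congrArg MulOpposite.unop T.opposite.u₀_p₁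

theorem p₀_u₂ : QCommute q (-2) T.p₀ T.u₂ := congrArg MulOpposite.unop T.opposite.u₁_p₁

theorem p₀_u₁ : QCommute q 0 T.p₀ T.u₁ := congrArg MulOpposite.unop T.opposite.u₂_p₁

theorem p₀_p₁ : QCommute q (-4) T.p₀ T.p₁ := by
  have hq := T.q_ne_zero
  have h₃₁ : QCommute q (-4 + 0) T.p₀ (T.u₃ * T.u₁) := T.p₀_u₃.mul_right hq T.p₀_u₁
  have h₂₂ : QCommute q (-2 + -2) T.p₀ (T.u₂ * T.u₂) := T.p₀_u₂.mul_right hq T.p₀_u₂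
  exact h₃₁.sub_right (h₂₂.smul_right _)

theorem z_p₁ : QCommute q (-2) T.z T.p₁ := by
  have hq := T.q_ne_zero
  have h₃₀ : QCommute q (2 + -4) (T.u₃ * T.u₀) T.p₁ := T.u₃_p₁.mul_left hq T.u₀_p₁
  have h₂₁ : QCommute q (0 + -2) (T.u₂ * T.u₁) T.p₁ := T.u₂_p₁.mul_left hq T.u₁_p₁
  exact h₃₀.sub_left (h₂₁.smul_left _)

theorem p₀_z : QCommute q (-2) T.p₀ T.z := congrArg MulOpposite.unop T.opposite.z_p₁

theorem qCommute_f {k l : ℤ} {x : A} (h₁ : QCommute q k x T.p₁) (h₀ : QCommute q l x T.p₀) :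
    QCommute q (k + l) x T.f :=
  (h₁.mul_right T.q_ne_zero h₀).smul_right _

theorem p₀_f : QCommute q (-4) T.p₀ T.f := T.qCommute_f T.p₀_p₁ (.refl q T.p₀)

theorem u₃_f : QCommute q 6 T.u₃ T.f := T.qCommute_f T.u₃_p₁ (T.p₀_u₃.symm T.q_ne_zero)

theorem u₂_mul_p₁_f : QCommute q 6 (T.u₂ * T.p₁) T.f := by
  have hq := T.q_ne_zero
  have h₂ : QCommute q (0 + 2) T.u₂ T.f := T.qCommute_f T.u₂_p₁ (T.p₀_u₂.symm hq)
  have hp : QCommute q (0 + 4) T.p₁ T.f := T.qCommute_f (.refl q T.p₁) (T.p₀_p₁.symm hq)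
  exact h₂.mul_left hq hp

theorem z_commute_f : Commute T.z T.f :=
  (T.qCommute_f T.z_p₁ (T.p₀_z.symm T.q_ne_zero)).commute

theorem z_mul_u₃ :
    T.z * T.u₃ = q ^ (-2 : ℤ) • (T.u₃ * T.z) + (q ^ (-2 : ℤ) - 1) • (T.u₂ * T.p₁) := by
  have hq := T.q_ne_zero
  simp only [z, p₁, mul_sub, sub_mul, mul_add, mul_assoc, smul_mul_assoc, mul_smul_comm,
    T.u₀_mul_u₃, T.u₁_mul_u₃, mul_mul_of_mul_eq T.u₂_u₃.eq]
  match_scalars <;> field_simp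
  all_goals ring

theorem z_mul_u₂ :
    T.z * T.u₂ =
      q ^ (-2 : ℤ) • (T.u₂ * T.z) + (q ^ (-2 : ℤ) - q ^ (-4 : ℤ)) • (T.u₃ * T.p₀) := by
  have hq := T.q_ne_zero
  simp only [z, p₀, mul_sub, sub_mul, mul_add, mul_assoc, smul_mul_assoc, mul_smul_comm,
    T.u₀_mul_u₂, T.u₁_u₂.eq, mul_mul_of_mul_eq T.u₂_u₃.eq]
  match_scalars <;> field_simp
  all_goals ring

theorem p₁_mul_u₁ : T.p₁ * T.u₁ = T.u₂ * T.z - q ^ (-2 : ℤ) • (T.u₃ * T.p₀) := by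
  have hq := T.q_ne_zero
  simp only [z, p₀, p₁, mul_sub, sub_mul, mul_assoc, smul_mul_assoc, mul_smul_comm,
    mul_mul_of_mul_eq T.u₂_u₃.eq]
  match_scalars <;> field_simp
  all_goals ring

end StraighteningTuple

/-- The two-parameter Chebyshev polynomials of the second kind, shifted by one:
`S₀ = 0`, `S₁ = 1` and `Sₙ₊₂ = Sₙ₊₁z − Sₙf`. -/
def chebyshevS (z f : A) : ℕ → A
  | 0 => 0
  | 1 => 1
  | n + 2 => chebyshevS z f (n + 1) * z - chebyshevS z f n * f

theorem commute_chebyshevS {z f x : A} (hz : Commute z x) (hf : Commute f x) (n : ℕ) :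
    Commute (chebyshevS z f n) x := by
  induction n using Nat.twoStepInduction with
  | zero => exact Commute.zero_left x
  | one => exact Commute.one_left x
  | more n ih₀ ih₁ => exact (ih₁.mul_left hz).sub_left (ih₀.mul_left hf)

namespace StraighteningTuple

variable (T : StraighteningTuple q A)

/-- The element `Sₙ(z, f)`; up to a power of `q`, `cheb (n + 1)` is `B[n,0,0,n]`. -/
def cheb (n : ℕ) : A := chebyshevS T.z T.f n

theorem cheb_commute_z (n : ℕ) : Commute (T.cheb n) T.z :=
  commute_chebyshevS (.refl T.z) T.z_commute_f.symm n

theorem cheb_commute_f (n : ℕ) : Commute (T.cheb n) T.f :=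
  commute_chebyshevS T.z_commute_f (.refl T.f) n

theorem z_mul_cheb (n : ℕ) : T.z * T.cheb (n + 1) = T.cheb (n + 2) + T.f * T.cheb n := by
  rw [← (T.cheb_commute_z (n + 1)).eq, ← (T.cheb_commute_f n).eq]
  exact (sub_add_cancel _ _).symm

/-- The elements `yₙ = u₃Sₙ₊₁ − q²u₂p₁Sₙ`, with leading PBW monomial `E[n+1,0,0,n]`
up to a power of `q`. -/
def y (n : ℕ) : A := T.u₃ * T.cheb (n + 1) - q ^ 2 • (T.u₂ * T.p₁ * T.cheb n)

/-- The elements `w₀ = q⁻²u₂` and `wₙ₊₁ = p₀yₙ`, with leading PBW monomial `E[n,1,0,n]` up to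
a power of `q`. -/
def w : ℕ → A
  | 0 => q ^ (-2 : ℤ) • T.u₂
  | n + 1 => T.p₀ * T.y n

theorem y_f (n : ℕ) : QCommute q 6 (T.y n) T.f := by
  have hq := T.q_ne_zero
  have hS (n : ℕ) : QCommute q 0 (T.cheb n) T.f := .of_commute (T.cheb_commute_f n)
  have h₃ : QCommute q (6 + 0) (T.u₃ * T.cheb (n + 1)) T.f := T.u₃_f.mul_left hq (hS _)
  have h₂ : QCommute q (6 + 0) (T.u₂ * T.p₁ * T.cheb n) T.f := T.u₂_mul_p₁_f.mul_left hq (hS _)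
  exact h₃.sub_left (h₂.smul_left _)

theorem z_mul_y_zero :
    T.z * T.y 0 = q ^ (-2 : ℤ) • T.y 1 + q ^ (-2 : ℤ) • (T.u₂ * T.p₁) := by
  have hq := T.q_ne_zero
  simp only [y, cheb, chebyshevS, mul_one, one_mul, mul_zero, zero_mul, smul_zero, sub_zero,
    T.z_mul_u₃]
  match_scalars <;> field_simp
  all_goals ring

theorem z_mul_u₂_mul_p₁ :
    T.z * (T.u₂ * T.p₁) = q ^ (-4 : ℤ) • (T.u₂ * T.p₁ * T.z) +
      (q ^ (-4 : ℤ) - q ^ (-6 : ℤ)) • (T.u₃ * T.f) := by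
  have hq := T.q_ne_zero
  rw [← mul_assoc, T.z_mul_u₂, f]
  simp only [add_mul, smul_mul_assoc, mul_smul_comm, mul_assoc, T.z_p₁.eq, T.p₀_p₁.eq]
  match_scalars <;> field_simp

theorem z_mul_y_succ (n : ℕ) :
    T.z * T.y (n + 1) = q ^ (-2 : ℤ) • T.y (n + 2) + q ^ (-4 : ℤ) • (T.y n * T.f) := by
  have hq := T.q_ne_zero
  have hz := T.z_mul_u₃
  have hz' := T.z_mul_u₂_mul_p₁
  simp only [y]
  generalize T.u₂ * T.p₁ = v at *
  simp only [mul_sub, sub_mul, mul_smul_comm, smul_mul_assoc, mul_assoc, (T.cheb_commute_f _).eq,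
    mul_mul_of_mul_eq hz, mul_mul_of_mul_eq hz', add_mul, T.z_mul_cheb, mul_add]
  match_scalars <;> field_simp
  all_goals ring

theorem z_mul_w_succ (n : ℕ) : T.z * T.w (n + 1) = T.w (n + 2) + T.f * T.w n := by
  have hq := T.q_ne_zero
  have hz : QCommute q 2 T.z T.p₀ := T.p₀_z.symm hq
  cases n with
  | zero =>
    simp only [w, mul_mul_of_mul_eq hz.eq, smul_mul_assoc, mul_assoc, T.z_mul_y_zero,
      T.u₂_p₁.commute.eq, f, mul_add, mul_smul_comm, mul_mul_of_mul_eq T.p₀_p₁.eq]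
    match_scalars <;> field_simp
  | succ n =>
    have hw : QCommute q 2 (T.p₀ * T.y n) T.f := T.p₀_f.mul_left hq (T.y_f n)
    simp only [w]
    rw [mul_mul_of_mul_eq hz.eq, smul_mul_assoc, mul_assoc, T.z_mul_y_succ, mul_add,
      mul_smul_comm, mul_smul_comm, ← mul_assoc _ (T.y n), hw.eq]
    match_scalars <;> field_simp

theorem f_eq :
    T.f = q ^ (-2 : ℤ) • (T.u₂ * T.p₁ * T.u₀) - T.u₂ * T.z * T.u₁ +
      q ^ (-2 : ℤ) • (T.u₃ * T.p₀ * T.u₁) := by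
  have hq := T.q_ne_zero
  have hp : T.p₁ * T.u₁ * T.u₁ = T.u₂ * T.z * T.u₁ - q ^ (-2 : ℤ) • (T.u₃ * T.p₀ * T.u₁) := by
    rw [T.p₁_mul_u₁, sub_mul, smul_mul_assoc]
  calc
    T.f = q ^ (-2 : ℤ) • (T.p₁ * T.u₂ * T.u₀) - T.p₁ * T.u₁ * T.u₁ := by
      rw [f, p₀, mul_sub, mul_smul_comm, ← mul_assoc, ← mul_assoc]
      match_scalars <;> field_simp
    _ = _ := by rw [hp, ← T.u₂_p₁.commute.eq, sub_add]

theorem z_mul_z_sub_f :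
    T.z * T.z - T.f = q ^ (-2 : ℤ) • (T.y 1 * T.u₀) - q ^ 4 • (T.w 1 * T.u₁) := by
  have hq := T.q_ne_zero
  have hz : T.z * T.z = T.z * T.u₃ * T.u₀ - q ^ 2 • (T.z * T.u₂ * T.u₁) := by
    conv_lhs => rw [z, mul_sub, mul_smul_comm, ← mul_assoc, ← mul_assoc]
    rfl
  rw [hz, T.f_eq, T.z_mul_u₃, T.z_mul_u₂]
  simp only [y, w, cheb, chebyshevS, mul_one, one_mul, mul_zero, zero_mul, smul_zero, sub_zero,
    T.p₀_u₃.eq, add_mul, sub_mul, smul_mul_assoc]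
  match_scalars <;> field_simp
  all_goals ring

theorem cheb_add_two_eq (n : ℕ) :
    T.cheb (n + 2) = q ^ (-2 * n : ℤ) • (T.y n * T.u₀) - q ^ 4 • (T.w n * T.u₁) := by
  have hq := T.q_ne_zero
  induction n using Nat.twoStepInduction with
  | zero =>
    simp only [y, w, cheb, chebyshevS, mul_one, one_mul, mul_zero, zero_mul, smul_zero, sub_zero,
      smul_mul_assoc, CharP.cast_eq_zero, zpow_zero, one_smul]
    rw [z]
    match_scalars <;> field_simp
  | one => simpa [cheb, chebyshevS] using T.z_mul_z_sub_f
  | more n ih₀ ih₁ =>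
    have hrec : T.cheb (n + 4) = T.z * T.cheb (n + 3) - T.f * T.cheb (n + 2) := by
      rw [T.z_mul_cheb, add_sub_cancel_right]
    have hy := ((T.y_f n).symm hq).eq
    have hpow : q ^ (-2 * ((n + 2 : ℕ) : ℤ)) = q ^ (-2 * (n : ℤ)) * q ^ (-4 : ℤ) := by
      rw [← zpow_add₀ hq]; congr 1; push_cast; ring
    have hpow' : q ^ (-2 * ((n + 1 : ℕ) : ℤ)) = q ^ (-2 * (n : ℤ)) * q ^ (-2 : ℤ) := by
      rw [← zpow_add₀ hq]; congr 1; push_cast; ring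
    rw [hrec, ih₀, ih₁, hpow, hpow']
    simp only [mul_sub, mul_smul_comm, ← mul_assoc, T.z_mul_y_succ, T.z_mul_w_succ, hy,
      add_mul, smul_mul_assoc]
    match_scalars <;> field_simp
    all_goals ring

/-- The rescaled PBW monomial `E[a] = q^{b(a)} u₃^{a₃} u₂^{a₂} u₁^{a₁} u₀^{a₀}`. -/
def pbw (a : Idx) : A :=
  q ^ bexp a • (T.u₃ ^ a.1 * T.u₂ ^ a.2.1 * T.u₁ ^ a.2.2.1 * T.u₀ ^ a.2.2.2)

variable (k l m t : ℕ)

theorem pbw_eq : T.pbw (k, l, m, t) =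
    q ^ ((k.choose 2 + l.choose 2 + m.choose 2 + t.choose 2 : ℕ) : ℤ) •
      (T.u₃ ^ k * T.u₂ ^ l * T.u₁ ^ m * T.u₀ ^ t) := by
  rw [zpow_natCast]
  rfl

theorem u₃_mul_pbw :
    T.u₃ * T.pbw (k, l, m, t) = q ^ (-k : ℤ) • T.pbw (k + 1, l, m, t) := by
  simp only [pbw_eq, choose_two_succ, pow_succ' T.u₃, mul_smul_comm, smul_smul,
    ← zpow_add₀ T.q_ne_zero, mul_assoc]
  congr 2
  push_cast; ring

theorem u₂_mul_pbw :
    T.u₂ * T.pbw (k, l, m, t) = q ^ (-(2 * k + l) : ℤ) • T.pbw (k, l + 1, m, t) := by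
  have h₃ := (T.u₂_u₃.pow_right T.q_ne_zero k).eq
  simp only [pbw_eq, choose_two_succ, pow_succ' T.u₂, mul_smul_comm, smul_mul_assoc, smul_smul,
    ← zpow_add₀ T.q_ne_zero, mul_assoc, mul_mul_of_mul_eq h₃]
  congr 2
  push_cast; ring

theorem pbw_mul_u₀ :
    T.pbw (k, l, m, t) * T.u₀ = q ^ (-t : ℤ) • T.pbw (k, l, m, t + 1) := by
  simp only [pbw_eq, choose_two_succ, pow_succ T.u₀, smul_mul_assoc, smul_smul,
    ← zpow_add₀ T.q_ne_zero, mul_assoc]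
  congr 2
  push_cast; ring

theorem pbw_mul_u₁ :
    T.pbw (k, l, m, t) * T.u₁ = q ^ (-(2 * t + m) : ℤ) • T.pbw (k, l, m + 1, t) := by
  have h₀ := (T.u₀_u₁.pow_left T.q_ne_zero t).eq
  simp only [pbw_eq, choose_two_succ, pow_succ T.u₁, mul_smul_comm, smul_mul_assoc, smul_smul,
    ← zpow_add₀ T.q_ne_zero, mul_assoc, h₀]
  congr 2
  push_cast; ring

theorem p₁_mul_pbw : T.p₁ * T.pbw (k, l, m, t) = q ^ (-(3 * k + 2 * l + m) : ℤ) •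
    (T.pbw (k + 1, l, m + 1, t) - q ^ (m + k + 1) • T.pbw (k, l + 2, m, t)) := by
  have hq := T.q_ne_zero
  have h₃₂ := (((T.u₃_p₁.symm hq).pow_right hq k).mul_right hq
    ((T.u₂_p₁.symm hq).pow_right hq l)).eq
  have h₂₃ := (T.u₂_u₃.pow_left hq l).eq
  have hp : T.p₁ * T.pbw (k, l, m, t) =
      q ^ ((k.choose 2 + l.choose 2 + m.choose 2 + t.choose 2 : ℕ) + -2 * k : ℤ) •
        (T.u₃ ^ k * (T.u₂ ^ l * T.p₁) * T.u₁ ^ m * T.u₀ ^ t) := by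
    rw [pbw_eq, mul_smul_comm, ← mul_assoc, ← mul_assoc, h₃₂, smul_mul_assoc, smul_mul_assoc,
      smul_smul, ← zpow_add₀ hq, mul_assoc (T.u₃ ^ k)]
    congr 2
    ring
  rw [hp, p₁, mul_sub, ← mul_assoc (T.u₂ ^ l), h₂₃]
  simp only [pbw_eq, choose_two_succ, pow_succ T.u₃, pow_succ' T.u₁, pow_succ T.u₂, mul_sub,
    sub_mul, smul_sub, mul_smul_comm, smul_mul_assoc, smul_smul, ← zpow_natCast q,
    ← zpow_add₀ hq, mul_assoc]
  congr 3 <;> (push_cast; ring)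

theorem p₀_mul_pbw : T.p₀ * T.pbw (k, l, m, t) = q ^ (-(4 * k + 3 * l + 2 * m + t) : ℤ) •
    (T.pbw (k, l + 1, m, t + 1) - q ^ (t + l + 1) • T.pbw (k, l, m + 2, t)) := by
  have hq := T.q_ne_zero
  have h₃₂ := ((T.p₀_u₃.pow_right hq k).mul_right hq (T.p₀_u₂.pow_right hq l)).eq
  have h₀₁ := (T.u₀_u₁.pow_right hq m).eq
  have hp : T.p₀ * T.pbw (k, l, m, t) =
      q ^ ((k.choose 2 + l.choose 2 + m.choose 2 + t.choose 2 : ℕ) + (-4 * k + -2 * l) : ℤ) •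
        (T.u₃ ^ k * T.u₂ ^ l * (T.p₀ * T.u₁ ^ m) * T.u₀ ^ t) := by
    rw [pbw_eq, mul_smul_comm, ← mul_assoc, ← mul_assoc, h₃₂, smul_mul_assoc, smul_mul_assoc,
      smul_smul, ← zpow_add₀ hq, mul_assoc _ T.p₀]
  rw [hp, p₀, sub_mul, mul_assoc T.u₂, h₀₁]
  simp only [pbw_eq, choose_two_succ, pow_succ T.u₂, pow_succ' T.u₀, pow_succ' T.u₁, mul_sub,
    sub_mul, smul_sub, mul_smul_comm, smul_mul_assoc, smul_smul, ← zpow_natCast q,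
    ← zpow_add₀ hq, mul_assoc]
  congr 3 <;> (push_cast; ring)

end StraighteningTuple

end Straightening

section Order

variable {a b c : Idx}

theorem tri_trans (hab : tri a b) (hbc : tri b c) : tri a c := by
  obtain ⟨s, r, h⟩ := hab
  obtain ⟨s', r', h'⟩ := hbc
  exact ⟨s + s', r + r', by push_cast; omega⟩

end Order

section Lattice

variable {K A : Type*} [Field K] [Ring A] [Algebra K A] {q : K}

/-- The `ℤ[q]`-lattice spanned by the vectors `E b` with `b ∈ s`. -/
def qLattice {ι : Type*} (q : K) (E : ι → A) (s : Set ι) : Submodule (Algebra.adjoin ℤ {q}) A :=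
  Submodule.span (Algebra.adjoin ℤ {q}) (E '' s)

theorem q_pow_smul_mem_qLattice {ι : Type*} {E : ι → A} {s : Set ι} {x : A} (e : ℕ)
    (hx : x ∈ qLattice q E s) : q ^ e • x ∈ qLattice q E s :=
  (qLattice q E s).smul_mem
    (⟨q ^ e, pow_mem (Algebra.self_mem_adjoin_singleton ℤ q) e⟩ : Algebra.adjoin ℤ {q}) hx

theorem map_mem_qLattice {ι : Type*} {E : ι → A} {s s' : Set ι} {x : A} (φ : A →ₗ[K] A)
    (hφ : ∀ b ∈ s, φ (E b) ∈ qLattice q E s') (hx : x ∈ qLattice q E s) :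
    φ x ∈ qLattice q E s' := by
  have hle : qLattice q E s ≤ (qLattice q E s').comap (φ.restrictScalars (Algebra.adjoin ℤ {q})) :=
    Submodule.span_le.2 (Set.image_subset_iff.2 hφ)
  exact hle hx

variable {E : Idx → A} {a b : Idx} {x y : A}

theorem mem_qLattice (h : tri a b) : E b ∈ qLattice q E {b | tri a b} :=
  Submodule.subset_span (Set.mem_image_of_mem E h)

/-- `x` agrees with `E a` up to a `qℤ[q]`-combination of the `E b` with `a ⊴ b`. -/
def HasLeadingTerm (q : K) (E : Idx → A) (a : Idx) (x : A) : Prop :=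
  ∃ y ∈ qLattice q E {b | tri a b}, x = E a + q • y

namespace HasLeadingTerm

theorem self (q : K) (E : Idx → A) (a : Idx) : HasLeadingTerm q E a (E a) :=
  ⟨0, zero_mem _, by simp⟩

theorem sub_q_smul (hx : HasLeadingTerm q E a x) (hy : y ∈ qLattice q E {b | tri a b}) :
    HasLeadingTerm q E a (x - q • y) := by
  obtain ⟨x', hx', rfl⟩ := hx
  exact ⟨x' - y, sub_mem hx' hy, by rw [smul_sub, add_sub_assoc]⟩

theorem mem_of_tri (hx : HasLeadingTerm q E b x) (h : tri a b) :
    x ∈ qLattice q E {b | tri a b} := by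
  obtain ⟨x', hx', rfl⟩ := hx
  have hle : qLattice q E {c | tri b c} ≤ qLattice q E {c | tri a c} :=
    Submodule.span_mono (Set.image_mono fun _ hc ↦ tri_trans h hc)
  simpa using add_mem (mem_qLattice h) (q_pow_smul_mem_qLattice 1 (hle hx'))

theorem map (hx : HasLeadingTerm q E a x) (φ : A →ₗ[K] A)
    (hφ : ∀ c, tri a c → φ (E c) ∈ qLattice q E {c | tri b c})
    (ha : HasLeadingTerm q E b (φ (E a))) : HasLeadingTerm q E b (φ x) := by
  obtain ⟨x', hx', rfl⟩ := hx
  obtain ⟨y, hy, hφa⟩ := ha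
  refine ⟨y + φ x', add_mem hy (map_mem_qLattice φ hφ hx'), ?_⟩
  rw [map_add, map_smul, hφa, smul_add, add_assoc]

variable {T : StraighteningTuple q A} {k l m t : ℕ}

theorem u₃_mul (hx : HasLeadingTerm q T.pbw (k, l, m, t) x) :
    HasLeadingTerm q T.pbw (k + 1, l, m, t) (q ^ (k : ℤ) • (T.u₃ * x)) := by
  refine hx.map (q ^ (k : ℤ) • LinearMap.mulLeft K T.u₃) ?_ ?_
  · rintro ⟨k', l', m', t'⟩ ⟨s, r, h⟩
    simp only [LinearMap.smul_apply, LinearMap.mulLeft_apply, T.u₃_mul_pbw, smul_smul,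
      ← zpow_add₀ T.q_ne_zero] at h ⊢
    rw [show (k : ℤ) + -k' = s by omega, zpow_natCast]
    exact q_pow_smul_mem_qLattice s (mem_qLattice ⟨s, r, by push_cast; omega⟩)
  · simpa [T.u₃_mul_pbw, smul_smul, T.q_ne_zero] using self q T.pbw (k + 1, l, m, t)

theorem u₂_mul (hx : HasLeadingTerm q T.pbw (k, l, m, t) x) :
    HasLeadingTerm q T.pbw (k, l + 1, m, t) (q ^ (2 * k + l : ℤ) • (T.u₂ * x)) := by
  refine hx.map (q ^ (2 * k + l : ℤ) • LinearMap.mulLeft K T.u₂) ?_ ?_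
  · rintro ⟨k', l', m', t'⟩ ⟨s, r, h⟩
    simp only [LinearMap.smul_apply, LinearMap.mulLeft_apply, T.u₂_mul_pbw, smul_smul,
      ← zpow_add₀ T.q_ne_zero] at h ⊢
    rw [show (2 * k + l : ℤ) + -(2 * k' + l') = r by omega, zpow_natCast]
    exact q_pow_smul_mem_qLattice r (mem_qLattice ⟨s, r, by push_cast; omega⟩)
  · simp only [LinearMap.smul_apply, LinearMap.mulLeft_apply, T.u₂_mul_pbw, smul_smul,
      ← zpow_add₀ T.q_ne_zero, add_neg_cancel, zpow_zero, one_smul, self]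

theorem mul_u₀ (hx : HasLeadingTerm q T.pbw (k, l, m, t) x) :
    HasLeadingTerm q T.pbw (k, l, m, t + 1) (q ^ (t : ℤ) • (x * T.u₀)) := by
  refine hx.map (q ^ (t : ℤ) • LinearMap.mulRight K T.u₀) ?_ ?_
  · rintro ⟨k', l', m', t'⟩ ⟨s, r, h⟩
    simp only [LinearMap.smul_apply, LinearMap.mulRight_apply, T.pbw_mul_u₀, smul_smul,
      ← zpow_add₀ T.q_ne_zero] at h ⊢
    rw [show (t : ℤ) + -t' = r by omega, zpow_natCast]
    exact q_pow_smul_mem_qLattice r (mem_qLattice ⟨s, r, by push_cast; omega⟩)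
  · simp only [LinearMap.smul_apply, LinearMap.mulRight_apply, T.pbw_mul_u₀, smul_smul,
      ← zpow_add₀ T.q_ne_zero, add_neg_cancel, zpow_zero, one_smul, self]

theorem mul_u₁ (hx : HasLeadingTerm q T.pbw (k, l, m, t) x) :
    HasLeadingTerm q T.pbw (k, l, m + 1, t) (q ^ (2 * t + m : ℤ) • (x * T.u₁)) := by
  refine hx.map (q ^ (2 * t + m : ℤ) • LinearMap.mulRight K T.u₁) ?_ ?_
  · rintro ⟨k', l', m', t'⟩ ⟨s, r, h⟩
    simp only [LinearMap.smul_apply, LinearMap.mulRight_apply, T.pbw_mul_u₁, smul_smul,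
      ← zpow_add₀ T.q_ne_zero] at h ⊢
    rw [show (2 * t + m : ℤ) + -(2 * t' + m') = s by omega, zpow_natCast]
    exact q_pow_smul_mem_qLattice s (mem_qLattice ⟨s, r, by push_cast; omega⟩)
  · simp only [LinearMap.smul_apply, LinearMap.mulRight_apply, T.pbw_mul_u₁, smul_smul,
      ← zpow_add₀ T.q_ne_zero, add_neg_cancel, zpow_zero, one_smul, self]

theorem p₁_mul (hx : HasLeadingTerm q T.pbw (k, l, m, t) x) :
    HasLeadingTerm q T.pbw (k + 1, l, m + 1, t) (q ^ (3 * k + 2 * l + m : ℤ) • (T.p₁ * x)) := by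
  refine hx.map (q ^ (3 * k + 2 * l + m : ℤ) • LinearMap.mulLeft K T.p₁) ?_ ?_
  · rintro ⟨k', l', m', t'⟩ ⟨s, r, h⟩
    simp only [LinearMap.smul_apply, LinearMap.mulLeft_apply, T.p₁_mul_pbw, smul_smul,
      ← zpow_add₀ T.q_ne_zero] at h ⊢
    rw [show (3 * k + 2 * l + m : ℤ) + -(3 * k' + 2 * l' + m') = 0 by omega, zpow_zero, one_smul]
    exact sub_mem (mem_qLattice ⟨s, r, by push_cast; omega⟩)
      (q_pow_smul_mem_qLattice _ (mem_qLattice ⟨s + 1, r, by push_cast; omega⟩))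
  · simp only [LinearMap.smul_apply, LinearMap.mulLeft_apply, T.p₁_mul_pbw, smul_smul,
      ← zpow_add₀ T.q_ne_zero, add_neg_cancel, zpow_zero, one_smul]
    rw [pow_succ', mul_smul]
    exact (self q _ _).sub_q_smul
      (q_pow_smul_mem_qLattice _ (mem_qLattice ⟨1, 0, by push_cast; omega⟩))

theorem p₀_mul (hx : HasLeadingTerm q T.pbw (k, l, m, t) x) :
    HasLeadingTerm q T.pbw (k, l + 1, m, t + 1)
      (q ^ (4 * k + 3 * l + 2 * m + t : ℤ) • (T.p₀ * x)) := by
  refine hx.map (q ^ (4 * k + 3 * l + 2 * m + t : ℤ) • LinearMap.mulLeft K T.p₀) ?_ ?_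
  · rintro ⟨k', l', m', t'⟩ ⟨s, r, h⟩
    simp only [LinearMap.smul_apply, LinearMap.mulLeft_apply, T.p₀_mul_pbw, smul_smul,
      ← zpow_add₀ T.q_ne_zero] at h ⊢
    rw [show (4 * k + 3 * l + 2 * m + t : ℤ) + -(4 * k' + 3 * l' + 2 * m' + t') = 0 by omega,
      zpow_zero, one_smul]
    exact sub_mem (mem_qLattice ⟨s, r, by push_cast; omega⟩)
      (q_pow_smul_mem_qLattice _ (mem_qLattice ⟨s, r + 1, by push_cast; omega⟩))
  · simp only [LinearMap.smul_apply, LinearMap.mulLeft_apply, T.p₀_mul_pbw, smul_smul,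
      ← zpow_add₀ T.q_ne_zero, add_neg_cancel, zpow_zero, one_smul]
    rw [pow_succ', mul_smul]
    exact (self q _ _).sub_q_smul
      (q_pow_smul_mem_qLattice _ (mem_qLattice ⟨0, 1, by push_cast; omega⟩))

end HasLeadingTerm

end Lattice

section LeadingTerms

variable {K A : Type*} [Field K] [Ring A] [Algebra K A] {q : K} {T : StraighteningTuple q A} {n : ℕ}

namespace StraighteningTuple

theorem hasLeadingTerm_cheb_succ
    (hy : HasLeadingTerm q T.pbw (n + 1, 0, 0, n) (q ^ (n * (2 * n - 1) : ℤ) • T.y n))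
    (hw : HasLeadingTerm q T.pbw (n, 1, 1, n) (q ^ (2 * (n + 1) * n + 2 : ℤ) • (T.w n * T.u₁))) :
    HasLeadingTerm q T.pbw (n + 1, 0, 0, n + 1)
      (q ^ (2 * (n + 1) * n : ℤ) • T.cheb (n + 2)) := by
  have hq := T.q_ne_zero
  have htri : tri (n + 1, 0, 0, n + 1) (n, 1, 1, n) := ⟨1, 1, by simp⟩
  convert hy.mul_u₀.sub_q_smul (q_pow_smul_mem_qLattice 1 (hw.mem_of_tri htri)) using 1
  simp only [T.cheb_add_two_eq, smul_sub, smul_mul_assoc, smul_smul, ← zpow_natCast q,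
    ← zpow_add₀ hq, ← zpow_one_add₀ hq]
  congr 3 <;> (push_cast; ring)

theorem hasLeadingTerm_y_succ
    (hS : HasLeadingTerm q T.pbw (n, 0, 0, n) (q ^ (2 * n * (n - 1) : ℤ) • T.cheb (n + 1)))
    (hS' : HasLeadingTerm q T.pbw (n + 1, 0, 0, n + 1)
      (q ^ (2 * (n + 1) * n : ℤ) • T.cheb (n + 2))) :
    HasLeadingTerm q T.pbw (n + 2, 0, 0, n + 1)
      (q ^ ((n + 1) * (2 * n + 1) : ℤ) • T.y (n + 1)) := by
  have hq := T.q_ne_zero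
  have htri : tri (n + 2, 0, 0, n + 1) (n + 1, 1, 1, n) := ⟨1, 1, by push_cast; ring_nf; simp⟩
  convert hS'.u₃_mul.sub_q_smul (hS.p₁_mul.u₂_mul.mem_of_tri htri) using 1
  simp only [y, smul_sub, mul_smul_comm, mul_assoc, smul_smul, ← zpow_natCast q,
    ← zpow_add₀ hq, ← zpow_one_add₀ hq]
  congr 3 <;> (push_cast; ring)

theorem hasLeadingTerm_w_succ_mul_u₁
    (hy : HasLeadingTerm q T.pbw (n + 1, 0, 0, n) (q ^ (n * (2 * n - 1) : ℤ) • T.y n)) :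
    HasLeadingTerm q T.pbw (n + 1, 1, 1, n + 1)
      (q ^ (2 * (n + 2) * (n + 1) + 2 : ℤ) • (T.w (n + 1) * T.u₁)) := by
  convert hy.p₀_mul.mul_u₁ using 1
  simp only [w, mul_smul_comm, smul_mul_assoc, mul_assoc, smul_smul, ← zpow_add₀ T.q_ne_zero]
  congr 2
  push_cast; ring

variable (T)

theorem hasLeadingTerm_cheb_y_w (n : ℕ) :
    HasLeadingTerm q T.pbw (n, 0, 0, n) (q ^ (2 * n * (n - 1) : ℤ) • T.cheb (n + 1)) ∧
    HasLeadingTerm q T.pbw (n + 1, 0, 0, n) (q ^ (n * (2 * n - 1) : ℤ) • T.y n) ∧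
    HasLeadingTerm q T.pbw (n, 1, 1, n) (q ^ (2 * (n + 1) * n + 2 : ℤ) • (T.w n * T.u₁)) := by
  have hq := T.q_ne_zero
  induction n with
  | zero =>
    refine ⟨?_, ?_, ?_⟩
    · simpa [cheb, chebyshevS, pbw, bexp] using HasLeadingTerm.self q T.pbw (0, 0, 0, 0)
    · simpa [y, cheb, chebyshevS, pbw, bexp] using HasLeadingTerm.self q T.pbw (1, 0, 0, 0)
    · simpa [w, smul_smul, hq, pbw, bexp] using HasLeadingTerm.self q T.pbw (0, 1, 1, 0)
  | succ n ih =>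
    obtain ⟨hS, hy, hw⟩ := ih
    have hS' := hasLeadingTerm_cheb_succ hy hw
    refine ⟨?_, ?_, ?_⟩
    · convert hS' using 3
      push_cast; ring
    · convert hasLeadingTerm_y_succ hS hS' using 3
      push_cast; ring
    · convert hasLeadingTerm_w_succ_mul_u₁ hy using 3
      push_cast; ring

theorem hasLeadingTerm_cheb (n : ℕ) :
    HasLeadingTerm q T.pbw (n, 0, 0, n) (q ^ (2 * n * (n - 1) : ℤ) • T.cheb (n + 1)) :=
  (T.hasLeadingTerm_cheb_y_w n).1

theorem hasLeadingTerm_cheb_mul_f (n : ℕ) :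
    HasLeadingTerm q T.pbw (n + 1, 1, 1, n + 1)
      (q ^ (2 * (n + 2) * (n + 1) : ℤ) • (T.cheb (n + 1) * T.f)) := by
  convert (T.hasLeadingTerm_cheb n).p₀_mul.p₁_mul using 1
  rw [(T.cheb_commute_f _).eq]
  simp only [f, mul_smul_comm, smul_mul_assoc, mul_assoc, smul_smul,
    ← zpow_add₀ T.q_ne_zero]
  congr 2
  push_cast; ring

end StraighteningTuple

end LeadingTerms

section BarInvariance

variable {K A ι : Type*} [Field K] [Ring A] [Algebra K A] {q c : K} {bar : K →+* K}

theorem aeval_reverse_eq (hq : q ≠ 0) (P : Polynomial ℤ) :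
    Polynomial.aeval q P.reverse = Polynomial.aeval q⁻¹ P * q ^ P.natDegree := by
  let _ : Invertible q⁻¹ := invertibleOfNonzero (inv_ne_zero hq)
  have h := Polynomial.eval₂_reverse_mul_pow (algebraMap ℤ K) q⁻¹ P
  rw [invOf_eq_inv, inv_inv] at h
  rw [Polynomial.aeval_def, Polynomial.aeval_def, ← h, mul_assoc, ← mul_pow, inv_mul_cancel₀ hq,
    one_pow, mul_one]

/-- Comparing degrees: `q⁻¹P(q⁻¹) = qP(q)` makes the reverse of `P` equal to `X ^ (deg P + 2) * P`,
whose degree is too large unless `P = 0`. -/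
theorem eq_zero_of_bar_q_mul_eq (hq : Transcendental ℤ q) (hbar : bar q = q⁻¹) {r : K}
    (hr : r ∈ Algebra.adjoin ℤ {q}) (hfix : bar (q * r) = q * r) : r = 0 := by
  have hq0 : q ≠ 0 := fun h ↦ hq (h ▸ isAlgebraic_zero)
  obtain ⟨P, rfl⟩ : r ∈ (Polynomial.aeval (R := ℤ) q).range := by
    rwa [← Algebra.adjoin_singleton_eq_range_aeval]
  have hbarP : bar (Polynomial.aeval q P) = Polynomial.aeval q⁻¹ P := by
    rw [← hbar]
    exact (Polynomial.aeval_algHom_apply bar.toIntAlgHom q P).symm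
  change bar (q * Polynomial.aeval q P) = q * Polynomial.aeval q P at hfix
  change Polynomial.aeval q P = 0
  have hinv : Polynomial.aeval q⁻¹ P = q ^ 2 * Polynomial.aeval q P := by
    rw [map_mul, hbar, hbarP, inv_mul_eq_iff_eq_mul₀ hq0] at hfix
    rw [hfix, pow_two, mul_assoc]
  have hrev : P.reverse = Polynomial.X ^ (P.natDegree + 2) * P := by
    apply transcendental_iff_injective.1 hq
    rw [aeval_reverse_eq hq0, hinv, map_mul, map_pow, Polynomial.aeval_X]
    ring
  by_contra hP
  have hP0 : P ≠ 0 := by rintro rfl; exact hP (map_zero _)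
  have hdeg := P.reverse_natDegree_le
  rw [hrev, Polynomial.natDegree_X_pow_mul _ hP0] at hdeg
  omega

theorem exists_linearCombination_of_mem_qLattice {E : ι → A} {s : Set ι} {y : A}
    (hy : y ∈ qLattice q E s) : ∃ φ : ι →₀ K, ↑φ.support ⊆ s ∧
      (∀ i, φ i ∈ Algebra.adjoin ℤ {q}) ∧ Finsupp.linearCombination K E φ = y := by
  obtain ⟨φ, hφ, rfl⟩ := (Finsupp.mem_span_image_iff_linearCombination _).1 hy
  refine ⟨φ.mapRange Subtype.val rfl, ?_, fun i ↦ (φ i).2, ?_⟩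
  · exact fun i hi ↦ hφ (Finsupp.support_mapRange hi)
  · rw [Finsupp.linearCombination_apply, Finsupp.linearCombination_apply,
      Finsupp.sum_mapRange_index fun i ↦ zero_smul K (E i)]
    rfl

theorem mkQ_map_linearCombination {M : Type*} [AddCommGroup M] [Module K M] {W : Submodule K M}
    {m : ι} {φ : ι →₀ K} (σ : A →ₛₗ[bar] M) (E : ι → A)
    (h : ∀ i ∈ φ.support, i ≠ m → σ (E i) ∈ W) :
    W.mkQ (σ (Finsupp.linearCombination K E φ)) = bar (φ m) • W.mkQ (σ (E m)) := by
  rw [Finsupp.linearCombination_apply, map_finsuppSum, map_finsuppSum, Finsupp.sum_eq_single m]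
  · rw [map_smulₛₗ, map_smul]
  · intro i hi him
    have hiW : W.mkQ (σ (E i)) = 0 := by
      simpa using h i (Finsupp.mem_support_iff.2 hi) him
    rw [map_smulₛₗ, map_smul, hiW, smul_zero]
  · intro _
    rw [zero_smul, map_zero, map_zero]

/-- Modulo the span of the other `E i`, the coefficient of `y` at an index of maximal height
must satisfy the eigenvalue equation by itself. -/
theorem eq_zero_of_mem_qLattice_of_map_eq {E : ι → A} {s : Set ι} {ht : ι → ℕ} {y : A}
    {σ : A →ₛₗ[bar] A} (hq : Transcendental ℤ q) (hbar : bar q = q⁻¹)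
    (hE : LinearIndependent K E) (hc : c ≠ 0)
    (htri : ∀ i ∈ s, σ (E i) - c • E i ∈ Submodule.span K (E '' {j | ht j < ht i}))
    (hy : y ∈ qLattice q E s) (hfix : σ (q • y) = c • q • y) : y = 0 := by
  obtain ⟨φ, hφs, hφq, rfl⟩ := exists_linearCombination_of_mem_qLattice hy
  suffices φ = 0 by rw [this, map_zero]
  by_contra hφ
  obtain ⟨m, hm, hmax⟩ := φ.support.exists_max_image ht (Finsupp.support_nonempty_iff.2 hφ)
  let W := Submodule.span K (E '' {m}ᶜ)
  have hE_mem (i : ι) (him : i ≠ m) : E i ∈ W := Submodule.subset_span ⟨i, him, rfl⟩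
  have hσE (i : ι) (hi : i ∈ φ.support) : σ (E i) - c • E i ∈ W := by
    refine Submodule.span_mono (Set.image_mono fun j hj ↦ ?_) (htri i (hφs hi))
    rintro rfl
    exact (hmax i hi).not_gt hj
  have hσE_mem (i : ι) (hi : i ∈ φ.support) (him : i ≠ m) : σ (E i) ∈ W :=
    (W.sub_mem_iff_left (W.smul_mem c (hE_mem i him))).1 (hσE i hi)
  have hEm : W.mkQ (E m) ≠ 0 := by
    simpa using hE.notMem_span_image (s := {m}ᶜ) (by simp)
  have hσEm : W.mkQ (σ (E m)) = c • W.mkQ (E m) := by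
    rw [← map_smul]
    exact (Submodule.Quotient.eq W).2 (hσE m hm)
  have hφm : W.mkQ (Finsupp.linearCombination K E φ) = φ m • W.mkQ (E m) :=
    mkQ_map_linearCombination (bar := .id K) .id E fun i _ ↦ hE_mem i
  have hcoeff : bar (q * φ m) = q * φ m := by
    have h := congrArg W.mkQ hfix
    rw [map_smulₛₗ, map_smul, map_smul, map_smul, mkQ_map_linearCombination σ E hσE_mem, hσEm, hφm,
      smul_smul, smul_smul, smul_smul, smul_smul] at h
    have hscalar : bar q * bar (φ m) * c = c * q * φ m := by
      simpa only [mul_assoc] using smul_left_injective K hEm h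
    rw [map_mul]
    exact mul_right_cancel₀ hc (hscalar.trans (by ring))
  exact Finsupp.mem_support_iff.1 hm (eq_zero_of_bar_q_mul_eq hq hbar (hφq m) hcoeff)

end BarInvariance

section DualCanonicalBasis

variable {K A : Type*} [Field K] [Ring A] [Algebra K A] {q : K} {bar : K →+* K} {a b : Idx}

/-- The quantity `a₃ + a₀`, which drops strictly along the order `⊴`. -/
def height (a : Idx) : ℕ := a.1 + a.2.2.2

theorem height_lt_of_mem_Sset (h : b ∈ Sset a) : height b < height a := by
  obtain ⟨⟨s, r, h⟩, hne⟩ := h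
  simp only [height, ne_eq, Prod.ext_iff] at hne ⊢
  omega

theorem Nnum_eq_of_tri (h : tri a b) : Nnum a = Nnum b := by
  obtain ⟨s, r, h₃, h₂, h₁, h₀⟩ := h
  rw [Nnum, Nnum, h₃, h₂, h₁, h₀]
  ring

/-- The family `B` is the dual canonical basis attached to the PBW family `E` and the twisted
bar involution `σ`: unitriangular over `qℤ[q]`, and an eigenvector family of `σ`. -/
def IsDualCanonicalBasis (q : K) (E : Idx → A) (σ : A → A) (B : Idx → A) : Prop :=
  ∀ a, (∃ φ : Idx →₀ Polynomial ℤ, ↑φ.support ⊆ Sset a ∧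
      B a - E a = φ.sum fun b p ↦ (q * Polynomial.eval₂ (Int.castRingHom K) q p) • E b) ∧
    σ (B a) = q ^ (-Nnum a) • B a

namespace IsDualCanonicalBasis

variable {E B : Idx → A} {σ : A →ₛₗ[bar] A}

theorem sub_mem_span (hB : IsDualCanonicalBasis q E σ B) (a : Idx) :
    B a - E a ∈ Submodule.span K (E '' Sset a) := by
  obtain ⟨⟨φ, hφ, hBa⟩, -⟩ := hB a
  rw [hBa]
  exact Submodule.sum_mem _ fun b hb ↦
    Submodule.smul_mem _ _ (Submodule.subset_span (Set.mem_image_of_mem E (hφ hb)))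

theorem map_eq_of_Sset_eq_empty (hB : IsDualCanonicalBasis q E σ B) (ha : Sset a = ∅) :
    σ (E a) = q ^ (-Nnum a) • E a := by
  have hBE : B a - E a = 0 := by simpa [ha] using hB.sub_mem_span a
  rw [← sub_eq_zero.1 hBE, (hB a).2]

theorem hasLeadingTerm (hB : IsDualCanonicalBasis q E σ B) (a : Idx) :
    HasLeadingTerm q E a (B a) := by
  obtain ⟨⟨φ, hφ, hBa⟩, -⟩ := hB a
  refine ⟨φ.sum fun b p ↦ Polynomial.aeval q p • E b, ?_, ?_⟩
  · exact Submodule.sum_mem _ fun b hb ↦ (qLattice q E {b | tri a b}).smul_mem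
      (⟨_, Polynomial.aeval_mem_adjoin_singleton ℤ q⟩ : Algebra.adjoin ℤ {q})
      (mem_qLattice (hφ hb).1)
  · rw [Finsupp.smul_sum, ← sub_eq_iff_eq_add', hBa]
    simp only [smul_smul]
    rfl

theorem map_sub_smul_mem_span (hB : IsDualCanonicalBasis q E σ B) (a : Idx) :
    σ (E a) - q ^ (-Nnum a) • E a ∈ Submodule.span K (E '' {b | height b < height a}) := by
  induction hn : height a using Nat.strong_induction_on generalizing a with
  | _ n ih =>
  subst hn
  let W := Submodule.span K (E '' {b | height b < height a})
  have hBE : B a - E a ∈ W :=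
    Submodule.span_mono (Set.image_mono fun _ ↦ height_lt_of_mem_Sset) (hB.sub_mem_span a)
  have hW : W ≤ W.comap σ := by
    refine Submodule.span_le.2 ?_
    rintro _ ⟨b, hb, rfl⟩
    have hEb : E b ∈ W := Submodule.subset_span ⟨b, hb, rfl⟩
    have hle : Submodule.span K (E '' {c | height c < height b}) ≤ W :=
      Submodule.span_mono (Set.image_mono fun c (hc : height c < _) ↦ hc.trans hb)
    exact (W.sub_mem_iff_left (W.smul_mem _ hEb)).1 (hle (ih _ hb b rfl))
  have hσE : σ (E a) - q ^ (-Nnum a) • E a = q ^ (-Nnum a) • (B a - E a) - σ (B a - E a) := by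
    rw [map_sub, (hB a).2, smul_sub]
    abel
  rw [hσE]
  exact sub_mem (W.smul_mem _ hBE) (hW hBE)

theorem eq_of_hasLeadingTerm (hB : IsDualCanonicalBasis q E σ B) (hq : Transcendental ℤ q)
    (hbar : bar q = q⁻¹) (hE : LinearIndependent K E) {x : A} (hx : HasLeadingTerm q E a x)
    (hσx : σ x = q ^ (-Nnum a) • x) : B a = x := by
  obtain ⟨y, hy, hBa⟩ := hB.hasLeadingTerm a
  obtain ⟨y', hy', rfl⟩ := hx
  have hsub : q • (y - y') = B a - (E a + q • y') := by
    rw [hBa, smul_sub]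
    abel
  have hfix : σ (q • (y - y')) = q ^ (-Nnum a) • q • (y - y') := by
    rw [hsub, map_sub, (hB a).2, hσx, smul_sub]
  have htri (b : Idx) (hb : tri a b) : σ (E b) - q ^ (-Nnum a) • E b ∈
      Submodule.span K (E '' {c | height c < height b}) := by
    rw [Nnum_eq_of_tri hb]
    exact hB.map_sub_smul_mem_span b
  have hq0 : q ≠ 0 := fun h ↦ hq (h ▸ isAlgebraic_zero)
  have hyy' : y - y' = 0 := eq_zero_of_mem_qLattice_of_map_eq hq hbar hE (zpow_ne_zero _ hq0) htri
    (sub_mem hy hy') hfix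
  rw [hBa, sub_eq_zero.1 hyy']

end IsDualCanonicalBasis

end DualCanonicalBasis

section TwistedBar

variable {K A : Type*} [Field K] [Ring A] [Algebra K A] {q : K} {bar : K →+* K}

/-- The twisted bar involution: a `bar`-semilinear anti-endomorphism `σ`, where `bar` inverts `q`,
scaling `uᵢ` by `q²ⁱ`. -/
structure IsTwistedBar (T : StraighteningTuple q A) (σ : A →ₛₗ[bar] A) : Prop where
  bar_q : bar q = q⁻¹
  map_one : σ 1 = 1
  map_mul (x y : A) : σ (x * y) = σ y * σ x
  map_u₀ : σ T.u₀ = T.u₀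
  map_u₁ : σ T.u₁ = q ^ 2 • T.u₁
  map_u₂ : σ T.u₂ = q ^ 4 • T.u₂
  map_u₃ : σ T.u₃ = q ^ 6 • T.u₃

namespace IsTwistedBar

variable {T : StraighteningTuple q A} {σ : A →ₛₗ[bar] A}

theorem map_zpow_smul (hσ : IsTwistedBar T σ) (k : ℤ) (x : A) :
    σ (q ^ k • x) = q ^ (-k) • σ x := by
  rw [map_smulₛₗ, map_zpow₀, hσ.bar_q, inv_zpow']

theorem map_pow_smul (hσ : IsTwistedBar T σ) (k : ℕ) (x : A) :
    σ (q ^ k • x) = q ^ (-k : ℤ) • σ x := by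
  rw [← zpow_natCast, hσ.map_zpow_smul]

theorem map_z (hσ : IsTwistedBar T σ) : σ T.z = q ^ (4 : ℤ) • T.z := by
  have hq := T.q_ne_zero
  rw [StraighteningTuple.z, map_sub, hσ.map_pow_smul, hσ.map_mul, hσ.map_mul, hσ.map_u₀,
    hσ.map_u₁, hσ.map_u₂, hσ.map_u₃]
  simp only [smul_mul_assoc, mul_smul_comm, T.u₀_mul_u₃, T.u₁_u₂.eq]
  match_scalars <;> field_simp
  all_goals ring

theorem map_p₁ (hσ : IsTwistedBar T σ) : σ T.p₁ = q ^ (6 : ℤ) • T.p₁ := by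
  have hq := T.q_ne_zero
  rw [StraighteningTuple.p₁, map_sub, hσ.map_pow_smul, hσ.map_mul, hσ.map_mul, hσ.map_u₁,
    hσ.map_u₂, hσ.map_u₃]
  simp only [smul_mul_assoc, mul_smul_comm, T.u₁_mul_u₃]
  match_scalars <;> field_simp
  all_goals ring

theorem map_p₀ (hσ : IsTwistedBar T σ) : σ T.p₀ = q ^ (2 : ℤ) • T.p₀ := by
  have hq := T.q_ne_zero
  rw [StraighteningTuple.p₀, map_sub, hσ.map_pow_smul, hσ.map_mul, hσ.map_mul, hσ.map_u₀,
    hσ.map_u₁, hσ.map_u₂]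
  simp only [smul_mul_assoc, mul_smul_comm, T.u₀_mul_u₂]
  match_scalars <;> field_simp
  all_goals ring

theorem map_f (hσ : IsTwistedBar T σ) : σ T.f = q ^ (8 : ℤ) • T.f := by
  rw [StraighteningTuple.f, hσ.map_zpow_smul, hσ.map_mul, hσ.map_p₁, hσ.map_p₀, smul_mul_assoc,
    mul_smul_comm, T.p₀_p₁.eq]
  simp only [smul_smul, ← zpow_add₀ T.q_ne_zero]
  norm_num

theorem map_cheb (hσ : IsTwistedBar T σ) (n : ℕ) :
    σ (T.cheb (n + 1)) = q ^ (4 * n : ℤ) • T.cheb (n + 1) := by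
  have hrec (n : ℕ) : T.cheb (n + 2) = T.cheb (n + 1) * T.z - T.cheb n * T.f := rfl
  induction n using Nat.twoStepInduction with
  | zero => simpa [StraighteningTuple.cheb, chebyshevS] using hσ.map_one
  | one => simpa [StraighteningTuple.cheb, chebyshevS] using hσ.map_z
  | more n ih₀ ih₁ =>
    rw [hrec, map_sub, hσ.map_mul, hσ.map_mul, ih₀, ih₁, hσ.map_z, hσ.map_f]
    simp only [smul_mul_assoc, mul_smul_comm, smul_smul, ← zpow_add₀ T.q_ne_zero, smul_sub]
    rw [(T.cheb_commute_z _).eq, (T.cheb_commute_f _).eq]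
    congr 1

end IsTwistedBar

namespace IsDualCanonicalBasis

variable {T : StraighteningTuple q A} {σ : A →ₛₗ[bar] A} {B : Idx → A}

theorem apply_n_0_0_n (hB : IsDualCanonicalBasis q T.pbw σ B) (hσ : IsTwistedBar T σ)
    (hq : Transcendental ℤ q) (hE : LinearIndependent K T.pbw) (n : ℕ) :
    B (n, 0, 0, n) = q ^ (2 * n * (n - 1) : ℤ) • T.cheb (n + 1) := by
  refine hB.eq_of_hasLeadingTerm hq hσ.bar_q hE (T.hasLeadingTerm_cheb n) ?_
  rw [hσ.map_zpow_smul, hσ.map_cheb, smul_smul, smul_smul, ← zpow_add₀ T.q_ne_zero,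
    ← zpow_add₀ T.q_ne_zero, Nnum]
  congr 2
  push_cast; ring

theorem apply_n_1_1_n (hB : IsDualCanonicalBasis q T.pbw σ B) (hσ : IsTwistedBar T σ)
    (hq : Transcendental ℤ q) (hE : LinearIndependent K T.pbw) (n : ℕ) :
    B (n + 1, 1, 1, n + 1) = q ^ (2 * (n + 2) * (n + 1) : ℤ) • (T.cheb (n + 1) * T.f) := by
  refine hB.eq_of_hasLeadingTerm hq hσ.bar_q hE (T.hasLeadingTerm_cheb_mul_f n) ?_
  rw [hσ.map_zpow_smul, hσ.map_mul, hσ.map_f, hσ.map_cheb, smul_mul_assoc, mul_smul_comm,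
    (T.cheb_commute_f _).eq]
  simp only [smul_smul, ← zpow_add₀ T.q_ne_zero, Nnum]
  congr 2
  push_cast; ring

theorem apply_1_0_0_1 (hB : IsDualCanonicalBasis q T.pbw σ B) (hσ : IsTwistedBar T σ)
    (hq : Transcendental ℤ q) (hE : LinearIndependent K T.pbw) : B (1, 0, 0, 1) = T.z := by
  simpa [StraighteningTuple.cheb, chebyshevS] using hB.apply_n_0_0_n hσ hq hE 1

theorem mul_apply_1_0_0_1 (hB : IsDualCanonicalBasis q T.pbw σ B) (hσ : IsTwistedBar T σ)
    (hq : Transcendental ℤ q) (hE : LinearIndependent K T.pbw) {n : ℕ} (hn : 1 ≤ n) :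
    B (n, 0, 0, n) * B (1, 0, 0, 1) =
      q ^ (-4 * (n : ℤ)) • B (n + 1, 0, 0, n + 1) + q ^ (-4 * (n : ℤ)) • B (n, 1, 1, n) := by
  obtain ⟨m, rfl⟩ := Nat.exists_eq_add_of_le' hn
  have hq0 := T.q_ne_zero
  have hrec : T.cheb (m + 2) * T.z = T.cheb (m + 3) + T.cheb (m + 1) * T.f :=
    (sub_add_cancel _ _).symm
  rw [hB.apply_1_0_0_1 hσ hq hE, hB.apply_n_1_1_n hσ hq hE, hB.apply_n_0_0_n hσ hq hE,
    hB.apply_n_0_0_n hσ hq hE, smul_mul_assoc, hrec, smul_add, smul_smul, smul_smul,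
    ← zpow_add₀ hq0, ← zpow_add₀ hq0]
  congr 3 <;> (push_cast; ring)

theorem apply_1_0_0_1_commute (hB : IsDualCanonicalBasis q T.pbw σ B) (hσ : IsTwistedBar T σ)
    (hq : Transcendental ℤ q) (hE : LinearIndependent K T.pbw) (n : ℕ) :
    Commute (B (1, 0, 0, 1)) (B (n, 0, 0, n)) := by
  rw [hB.apply_1_0_0_1 hσ hq hE, hB.apply_n_0_0_n hσ hq hE]
  exact (T.cheb_commute_z _).symm.smul_right _

end IsDualCanonicalBasis

theorem stmt14_general {T : StraighteningTuple q A} {σ : A →ₛₗ[bar] A} {B : Idx → A}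
    (hq : Transcendental ℤ q) (hE : LinearIndependent K T.pbw) (hσ : IsTwistedBar T σ)
    (hB : IsDualCanonicalBasis q T.pbw σ B) {n : ℕ} (hn : 1 ≤ n) :
    B (n, 0, 0, n) * B (1, 0, 0, 1)
        = q ^ (-4 * (n : ℤ)) • B (n + 1, 0, 0, n + 1)
          + q ^ (-4 * (n : ℤ)) • B (n, 1, 1, n) ∧
    B (1, 0, 0, 1) * B (n, 0, 0, n)
        = q ^ (-4 * (n : ℤ)) • B (n + 1, 0, 0, n + 1)
          + q ^ (-4 * (n : ℤ)) • B (n, 1, 1, n) ∧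
    B (1, 0, 0, 1) * B (n, 0, 0, n) = B (n, 0, 0, n) * B (1, 0, 0, 1) := by
  have hmul := hB.mul_apply_1_0_0_1 hσ hq hE hn
  have hcomm := (hB.apply_1_0_0_1_commute hσ hq hE n).eq
  exact ⟨hmul, hcomm.trans hmul, hcomm⟩

end TwistedBar

section Leibniz

variable {K A : Type*} [CommRing K] [Ring A] [Algebra K A] {D : A →ₗ[K] A} {p : K} {x y z w : A}

theorem mul_eq_of_leibniz (hD : ∀ x y, D (x * y) = D x * y + x * D y) (hx : D x = y) (hy : D y = z)
    (hxy : x * y = p • (y * x)) : x * z = p • (z * x) + (p - 1) • (y * y) := by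
  have h := congrArg D hxy
  rw [map_smul, hD, hD, hx, hy] at h
  rw [eq_sub_of_add_eq' h]
  module

theorem mul_eq_of_leibniz_of_leibniz (hD : ∀ x y, D (x * y) = D x * y + x * D y) (hx : D x = y)
    (hy : D y = z) (hz : D z = w) (hxy : x * y = p • (y * x)) (hyz : y * z = p • (z * y)) :
    x * w = p • (w * x) + (p ^ 2 - 1) • (z * y) := by
  have h := congrArg D (mul_eq_of_leibniz hD hx hy hxy)
  simp only [map_add, map_smul, hD, hx, hy, hz, hyz] at h
  rw [eq_sub_of_add_eq' h]
  module

end Leibniz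

section Kronecker

theorem qq_ne_zero : qq ≠ 0 := RatFunc.X_ne_zero

-- Stated for a general field because `RatFunc ℚ` carries a second `ℤ`-algebra instance, which is
-- not definitionally the canonical one.
theorem transcendental_algebraMap_X {K : Type*} [Field K] [Algebra (Polynomial ℚ) K]
    [FaithfulSMul (Polynomial ℚ) K] :
    Transcendental ℤ (algebraMap (Polynomial ℚ) K Polynomial.X) :=
  (transcendental_algebraMap_iff (FaithfulSMul.algebraMap_injective _ K)).2
    ((Polynomial.transcendental_X ℚ).restrictScalars Int.cast_injective)

/-- The derivation `(1 − q⁻²)⁻²[A, ·]` of `U`, which carries `uᵢ` to `uᵢ₊₁`. -/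
def shift : U →ₗ[F] U :=
  ((1 - (qq⁻¹) ^ 2)⁻¹) ^ 2 • (LinearMap.mulLeft F Aelt - LinearMap.mulRight F Aelt)

theorem shift_apply (x : U) :
    shift x = ((1 - (qq⁻¹) ^ 2)⁻¹) ^ 2 • (Aelt * x - x * Aelt) := rfl

theorem shift_mul (x y : U) : shift (x * y) = shift x * y + x * shift y := by
  simp only [shift_apply, smul_mul_assoc, mul_smul_comm, ← smul_add, mul_sub, sub_mul, mul_assoc]
  abel_nf

theorem shift_u0 : shift u0 = u1 := rfl

theorem shift_u1 : shift u1 = u2 := by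
  rw [u1, map_smul, shift_apply, smul_smul, ← pow_add]
  rfl

theorem shift_u2 : shift u2 = u3 := by
  rw [u2, map_smul, shift_apply, smul_smul, ← pow_add]
  rfl

theorem Sset_eq_empty_of_adjacent {a : Idx}
    (ha : a ∈ ({(0, 0, 1, 1), (0, 1, 1, 0), (1, 1, 0, 0)} : Set Idx)) :
    Sset a = ∅ := by
  refine Set.eq_empty_of_forall_notMem fun b ⟨⟨s, r, h⟩, hne⟩ ↦ hne ?_
  rcases ha with rfl | rfl | rfl <;> simp only [Prod.ext_iff] at h ⊢ <;> omega

theorem qCommute_of_map_eq {K A : Type*} [Field K] [Ring A] [Algebra K A] {q : K} {σ : A → A}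
    {x y : A} {k l : ℕ} {d m : ℤ} (hq : q ≠ 0) (hmul : σ (y * x) = σ x * σ y)
    (hx : σ x = q ^ k • x) (hy : σ y = q ^ l • y) (hyx : σ (y * x) = q ^ m • (y * x))
    (hm : m = k + l + d) : QCommute q d x y := by
  have h : q ^ (k + l : ℤ) • (x * y) = q ^ (k + l : ℤ) • q ^ d • (y * x) := by
    rw [smul_smul, ← zpow_add₀ hq, ← hm, ← hyx, hmul, hx, hy, smul_mul_assoc, mul_smul_comm,
      smul_smul, zpow_add₀ hq, zpow_natCast, zpow_natCast]
  exact (smul_right_inj (zpow_ne_zero _ hq)).1 h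

theorem linearIndependent_Ee (hPBW : LinearIndependent F mon) : LinearIndependent F Ee :=
  hPBW.units_smul fun a ↦ Units.mk0 (qq ^ bexp a) (pow_ne_zero _ qq_ne_zero)

namespace SigmaHyp

variable {bar : F →+* F} {σ : Sgen → Sgen} {B : Idx → Sgen}

/-- The anti-automorphism `σ` bundled as a `bar`-semilinear map. -/
def toSemilinearMap (hσ : SigmaHyp bar σ) : Sgen →ₛₗ[bar] Sgen where
  toFun := σ
  map_add' := hσ.2.2.1
  map_smul' := hσ.2.2.2.2.1

theorem map_mul (hσ : SigmaHyp bar σ) (x y : Sgen) : σ (x * y) = σ y * σ x := hσ.2.2.2.1 x y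

theorem map_one (hσ : SigmaHyp bar σ) : σ 1 = 1 := by
  obtain ⟨x, hx⟩ := hσ.2.1.surjective 1
  calc
    σ 1 = σ 1 * σ x := by rw [hx, mul_one]
    _ = 1 := by rw [← hσ.map_mul, mul_one, hx]

theorem map_us0 (hσ : SigmaHyp bar σ) : σ us0 = us0 := hσ.2.2.2.2.2.1

theorem map_us1 (hσ : SigmaHyp bar σ) : σ us1 = qq ^ 2 • us1 := hσ.2.2.2.2.2.2.1

theorem map_us2 (hσ : SigmaHyp bar σ) : σ us2 = qq ^ 4 • us2 := hσ.2.2.2.2.2.2.2.1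

theorem map_us3 (hσ : SigmaHyp bar σ) : σ us3 = qq ^ 6 • us3 := hσ.2.2.2.2.2.2.2.2

theorem isDualCanonicalBasis (hσ : SigmaHyp bar σ) (hB : DCB bar σ B) :
    IsDualCanonicalBasis qq Ee hσ.toSemilinearMap B := hB

theorem map_Ee_of_Sset_eq_empty (hσ : SigmaHyp bar σ) (hB : DCB bar σ B) {a : Idx}
    (ha : Sset a = ∅) : σ (Ee a) = qq ^ (-Nnum a) • Ee a :=
  (hσ.isDualCanonicalBasis hB).map_eq_of_Sset_eq_empty ha

theorem us0_us1 (hσ : SigmaHyp bar σ) (hB : DCB bar σ B) : QCommute qq (-2) us0 us1 := by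
  have hE : Ee (0, 0, 1, 1) = us1 * us0 := by simp [Ee, mon, bexp]
  have hσE :=
    hσ.map_Ee_of_Sset_eq_empty hB (Sset_eq_empty_of_adjacent (a := (0, 0, 1, 1)) (by simp))
  exact qCommute_of_map_eq (k := 0) qq_ne_zero (hσ.map_mul _ _) (by simpa using hσ.map_us0)
    hσ.map_us1 (hE ▸ hσE) rfl

theorem us1_us2 (hσ : SigmaHyp bar σ) (hB : DCB bar σ B) : QCommute qq (-2) us1 us2 := by
  have hE : Ee (0, 1, 1, 0) = us2 * us1 := by simp [Ee, mon, bexp]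
  have hσE :=
    hσ.map_Ee_of_Sset_eq_empty hB (Sset_eq_empty_of_adjacent (a := (0, 1, 1, 0)) (by simp))
  exact qCommute_of_map_eq qq_ne_zero (hσ.map_mul _ _) hσ.map_us1 hσ.map_us2 (hE ▸ hσE) rfl

theorem us2_us3 (hσ : SigmaHyp bar σ) (hB : DCB bar σ B) : QCommute qq (-2) us2 us3 := by
  have hE : Ee (1, 1, 0, 0) = us3 * us2 := by simp [Ee, mon, bexp]
  have hσE :=
    hσ.map_Ee_of_Sset_eq_empty hB (Sset_eq_empty_of_adjacent (a := (1, 1, 0, 0)) (by simp))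
  exact qCommute_of_map_eq qq_ne_zero (hσ.map_mul _ _) hσ.map_us2 hσ.map_us3 (hE ▸ hσE) rfl

/-- The generators of `S` as a straightening tuple. The `q`-commutation of neighbours expresses
that `E[a]` is itself dual canonical when `S(a)` is empty, and the remaining relations follow by
applying the derivation `shift`. -/
def straighteningTuple (hσ : SigmaHyp bar σ) (hB : DCB bar σ B) : StraighteningTuple qq Sgen where
  u₀ := us0
  u₁ := us1
  u₂ := us2
  u₃ := us3
  q_ne_zero := qq_ne_zero
  u₀_u₁ := hσ.us0_us1 hB
  u₁_u₂ := hσ.us1_us2 hB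
  u₂_u₃ := hσ.us2_us3 hB
  u₀_mul_u₂ := Subtype.ext <|
    mul_eq_of_leibniz shift_mul shift_u0 shift_u1 (congrArg Subtype.val (hσ.us0_us1 hB))
  u₁_mul_u₃ := Subtype.ext <|
    mul_eq_of_leibniz shift_mul shift_u1 shift_u2 (congrArg Subtype.val (hσ.us1_us2 hB))
  u₀_mul_u₃ := by
    have hpow : qq ^ (-4 : ℤ) = (qq ^ (-2 : ℤ)) ^ 2 := by rw [← zpow_natCast, ← zpow_mul]; rfl
    rw [hpow]
    exact Subtype.ext <| mul_eq_of_leibniz_of_leibniz shift_mul shift_u0 shift_u1 shift_u2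
      (congrArg Subtype.val (hσ.us0_us1 hB)) (congrArg Subtype.val (hσ.us1_us2 hB))

theorem straighteningTuple_pbw (hσ : SigmaHyp bar σ) (hB : DCB bar σ B) :
    (hσ.straighteningTuple hB).pbw = Ee := rfl

theorem isDualCanonicalBasis_pbw (hσ : SigmaHyp bar σ) (hB : DCB bar σ B) :
    IsDualCanonicalBasis qq (hσ.straighteningTuple hB).pbw hσ.toSemilinearMap B := by
  rw [straighteningTuple_pbw]
  exact hσ.isDualCanonicalBasis hB

theorem linearIndependent_pbw (hσ : SigmaHyp bar σ) (hB : DCB bar σ B)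
    (hPBW : LinearIndependent F mon) : LinearIndependent F (hσ.straighteningTuple hB).pbw := by
  rw [straighteningTuple_pbw]
  exact linearIndependent_Ee hPBW

theorem isTwistedBar (hσ : SigmaHyp bar σ) (hB : DCB bar σ B) :
    IsTwistedBar (hσ.straighteningTuple hB) hσ.toSemilinearMap where
  bar_q := hσ.1
  map_one := hσ.map_one
  map_mul := hσ.map_mul
  map_u₀ := hσ.map_us0
  map_u₁ := hσ.map_us1
  map_u₂ := hσ.map_us2
  map_u₃ := hσ.map_us3

end SigmaHyp

end Kronecker

/-- For every integer `n ≥ 1` the dual canonical basis elements satisfy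
`B[n,0,0,n]·B[1,0,0,1] = q^{−4n} B[n+1,0,0,n+1] + q^{−4n} B[n,1,1,n]` and
`B[1,0,0,1]·B[n,0,0,n] = q^{−4n} B[n+1,0,0,n+1] + q^{−4n} B[n,1,1,n]`; in particular
`B[1,0,0,1]` commutes with `B[n,0,0,n]`. -/
theorem stmt14 (bar : F →+* F) (σ : Sgen → Sgen) (B : Idx → Sgen)
    (hPBW : LinearIndependent F mon) (hσ : SigmaHyp bar σ) (hB : DCB bar σ B) (n : ℕ) (hn : 1 ≤ n) :
    B (n, 0, 0, n) * B (1, 0, 0, 1)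
        = qq ^ (-4 * (n : ℤ)) • B (n + 1, 0, 0, n + 1)
          + qq ^ (-4 * (n : ℤ)) • B (n, 1, 1, n) ∧
    B (1, 0, 0, 1) * B (n, 0, 0, n)
        = qq ^ (-4 * (n : ℤ)) • B (n + 1, 0, 0, n + 1)
          + qq ^ (-4 * (n : ℤ)) • B (n, 1, 1, n) ∧
    B (1, 0, 0, 1) * B (n, 0, 0, n) = B (n, 0, 0, n) * B (1, 0, 0, 1) := by
  have hq := transcendental_algebraMap_X (K := F)
  rw [RatFunc.algebraMap_X] at hq
  exact stmt14_general hq (hσ.linearIndependent_pbw hB hPBW) (hσ.isTwistedBar hB)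
    (hσ.isDualCanonicalBasis_pbw hB) hn
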